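/- Let n ≥ 2, α ∈ (0,1], C > 0, a_1,…,a_n > 0 with a_1 + ⋯ + a_n = 1, and let q_α(x) = C(a_1 x_1^α + ⋯ + a_n x_n^α)^{1/α} on ℝ^n_+. Then for every z = (z_1,…,z_n) ∈ ℂ^n with Re z ∈ ℝ^n_+, writing s = z_1 + ⋯ + z_n, one has (M e^{−q_α})(z) = Γ(s) / (α^{n−1} C^s Γ(s/α)) · ∏_{j=1}^n a_j^{−z_j/α} Γ(z_j/α), where Γ is the Gamma function. In particular, (M e^{−q_α})(z) ≠ 0 for all z with Re z ∈ ℝ^n_+. -/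

import Mathlib

open MeasureTheory Complex Set

noncomputable section

/-- The positive orthant `ℝ^n_+`. -/
def posOrth (n : ℕ) : Set (Fin n → ℝ) := {x | ∀ i, 0 < x i}

/-- The `n`-dimensional Mellin transform `(Mg)(z) = ∫_{ℝ^n_+} x^{z-I} g(x) dx`. -/
def mellinT (n : ℕ) (g : (Fin n → ℝ) → ℝ) (z : Fin n → ℂ) : ℂ :=
  ∫ x in posOrth n, (∏ i, (x i : ℂ) ^ (z i - 1)) * g x

/-- The CES unit cost function `q_α(x) = C (a₁x₁^α + ⋯ + aₙxₙ^α)^{1/α}`. -/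
def cesCost (n : ℕ) (α C : ℝ) (a : Fin n → ℝ) (x : Fin n → ℝ) : ℝ :=
  C * (∑ i, a i * x i ^ α) ^ (1 / α)

/-- the one-dimensional kernel -/
def kker (w : ℂ) (b p t : ℝ) : ℂ := (t : ℂ) ^ (w - 1) * (Real.exp (-(b * t ^ p)) : ℝ)

lemma kker_integral (w : ℂ) {b p : ℝ} (hb : 0 < b) (hw : 0 < (w / p).re) :
    ∫ t in Ioi (0 : ℝ), kker w b p t = ((|p|⁻¹ : ℝ) : ℂ) * (b : ℂ) ^ (-(w / p)) * Complex.Gamma (w / p) := by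
  have h1 : ∫ t in Ioi (0 : ℝ), kker w b p t
      = mellin (fun t : ℝ => (fun u : ℝ => ((Real.exp (-(b * u)) : ℝ) : ℂ)) (t ^ p)) w := rfl
  rw [h1, mellin_comp_rpow (fun u : ℝ => ((Real.exp (-(b * u)) : ℝ) : ℂ)),
    mellin_comp_mul_left (fun u : ℝ => ((Real.exp (-u) : ℝ) : ℂ)) _ hb, Complex.Gamma_eq_integral hw,
    Complex.GammaIntegral_eq_mellin]
  simp [mul_assoc]

lemma kker_integrable (w : ℂ) {b p : ℝ} (hp : p ≠ 0) (hb : 0 < b) (hw : 0 < (w / p).re) :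
    IntegrableOn (kker w b p) (Ioi 0) := by
  by_contra h
  have h2 := kker_integral w hb hw
  rw [integral_undef h] at h2
  have h3 := Complex.Gamma_ne_zero_of_re_pos hw
  have h4 : (b : ℂ) ^ (-(w / p)) ≠ 0 := by
    rw [Ne, Complex.cpow_eq_zero_iff]
    simp [hb.ne']
  have h5 : ((|p|⁻¹ : ℝ) : ℂ) ≠ 0 := by
    simpa using hp
  exact mul_ne_zero (mul_ne_zero h5 h4) h3 h2.symm

lemma kker_norm (w : ℂ) {b p : ℝ} {t : ℝ} (ht : 0 < t) :
    ((‖kker w b p t‖ : ℝ) : ℂ) = kker (w.re : ℂ) b p t := by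
  rw [kker, kker, norm_mul, Complex.norm_cpow_eq_rpow_re_of_pos ht, Complex.norm_real,
    Real.norm_of_nonneg (Real.exp_pos _).le]
  push_cast
  rw [Complex.ofReal_cpow ht.le]
  simp

lemma kker_norm_integral (w : ℂ) {b p : ℝ} (hb : 0 < b) (hw : 0 < (w / p).re) :
    ∫ t in Ioi (0 : ℝ), ‖kker w b p t‖ = |p|⁻¹ * ‖(b : ℂ) ^ (-(w / p))‖ * Real.Gamma (w.re / p) := by
  have h : (((∫ t in Ioi (0 : ℝ), ‖kker w b p t‖ : ℝ)) : ℂ) = ∫ t in Ioi (0 : ℝ), kker (w.re : ℂ) b p t := by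
    rw [← integral_complex_ofReal]
    exact setIntegral_congr_fun measurableSet_Ioi fun t ht => kker_norm w ht
  have hw' : 0 < (((w.re : ℂ)) / p).re := by simpa using hw
  rw [kker_integral _ hb hw'] at h
  apply Complex.ofReal_injective
  rw [h, Complex.norm_cpow_eq_rpow_re_of_pos hb]
  push_cast
  rw [Complex.ofReal_cpow hb.le, ← Complex.Gamma_ofReal]
  simp

lemma kker_fubini {X : Type*} [MeasurableSpace X] {μ : Measure X} [SFinite μ]
    {R : X → ℂ} (hR : Integrable R μ) (b : X → ℝ) (hbm : Measurable b) (hb : ∀ᵐ x ∂μ, 0 < b x)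
    (w : ℂ) (p : ℝ) (hp : p ≠ 0) (hw : 0 < (w / p).re) :
    ∫ t in Ioi (0 : ℝ), ∫ x, R x * (b x : ℂ) ^ (w / p) * kker w (b x) p t ∂μ
      = ((|p|⁻¹ : ℝ) : ℂ) * Complex.Gamma (w / p) * ∫ x, R x ∂μ := by
  have hcancel : ∀ x, 0 < b x → (b x : ℂ) ^ (w / p) * (b x : ℂ) ^ (-(w / p)) = 1 := by
    intro x hx
    rw [← Complex.cpow_add _ _ (by simpa using hx.ne')]
    simp
  have hint : Integrable (Function.uncurry fun x t => R x * (b x : ℂ) ^ (w / p) * kker w (b x) p t)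
      (μ.prod (volume.restrict (Ioi (0 : ℝ)))) := by
    rw [integrable_prod_iff]
    · constructor
      · filter_upwards [hb] with x hx
        exact (kker_integrable w hp hx hw).const_mul (R x * (b x : ℂ) ^ (w / p))
      · refine (hR.norm.mul_const (|p|⁻¹ * Real.Gamma (w.re / p))).congr ?_
        filter_upwards [hb] with x hx
        simp only [Function.uncurry, norm_mul (R x * _)]
        rw [integral_const_mul, kker_norm_integral w hx hw, norm_mul]
        have := congrArg norm (hcancel x hx)
        rw [norm_mul, norm_one] at this
        linear_combination (- ‖R x‖ * (|p|⁻¹ * Real.Gamma (w.re / p))) * this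
    · have h1 : AEStronglyMeasurable (fun q : X × ℝ => R q.1) (μ.prod (volume.restrict (Ioi (0 : ℝ)))) :=
        hR.aestronglyMeasurable.comp_fst
      have h2 : Measurable (fun q : X × ℝ => (b q.1 : ℂ) ^ (w / p) * kker w (b q.1) p q.2) := by
        unfold kker
        fun_prop
      refine (h1.mul h2.aestronglyMeasurable).congr (Filter.Eventually.of_forall fun q => ?_)
      simp [Function.uncurry, mul_assoc]
  rw [← integral_integral_swap hint, ← integral_const_mul]
  apply integral_congr_ae
  filter_upwards [hb] with x hx
  rw [integral_const_mul, kker_integral w hx hw]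
  linear_combination (R x * ((|p|⁻¹ : ℝ) : ℂ) * Complex.Gamma (w / p)) * hcancel x hx

lemma posOrth_eq (n : ℕ) : posOrth n = Set.univ.pi fun _ => Ioi (0 : ℝ) := by
  ext x; simp [posOrth]

lemma posOrth_meas (n : ℕ) : MeasurableSet (posOrth n) := by
  rw [posOrth_eq]
  exact MeasurableSet.univ_pi fun _ => measurableSet_Ioi

lemma posOrth_restrict (n : ℕ) : (volume : Measure (Fin n → ℝ)).restrict (posOrth n)
    = Measure.pi fun _ => volume.restrict (Ioi (0 : ℝ)) := by
  rw [posOrth_eq, volume_pi, Measure.restrict_pi_pi]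

lemma kker_prod (n : ℕ) (z : Fin n → ℂ) (b : Fin n → ℝ) (p : ℝ) (x : Fin n → ℝ) :
    ∏ i, kker (z i) (b i) p (x i)
      = (∏ i, (x i : ℂ) ^ (z i - 1)) * (Real.exp (-∑ i, b i * x i ^ p) : ℝ) := by
  simp only [kker]
  rw [Finset.prod_mul_distrib, ← Finset.sum_neg_distrib, Real.exp_sum]
  push_cast
  rfl

lemma kker_prod_integrable (n : ℕ) (z : Fin n → ℂ) (b : Fin n → ℝ) (p : ℝ) (hp : 0 < p)
    (hb : ∀ i, 0 < b i) (hz : ∀ i, 0 < (z i).re) :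
    Integrable (fun x : Fin n → ℝ =>
      (∏ i, (x i : ℂ) ^ (z i - 1)) * (Real.exp (-∑ i, b i * x i ^ p) : ℝ))
      (volume.restrict (posOrth n)) := by
  simp_rw [← kker_prod]
  rw [posOrth_restrict]
  refine Integrable.fintype_prod (f := fun i t => kker (z i) (b i) p t) fun i => ?_
  exact kker_integrable (z i) hp.ne' (hb i) (by simpa using div_pos (hz i) hp)

lemma kker_prod_integral (n : ℕ) (z : Fin n → ℂ) (b : Fin n → ℝ) (p : ℝ) (hp : 0 < p)
    (hb : ∀ i, 0 < b i) (hz : ∀ i, 0 < (z i).re) :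
    ∫ x in posOrth n, (∏ i, (x i : ℂ) ^ (z i - 1)) * (Real.exp (-∑ i, b i * x i ^ p) : ℝ)
      = ∏ i, (((p⁻¹ : ℝ) : ℂ) * (b i : ℂ) ^ (-(z i / p)) * Complex.Gamma (z i / p)) := by
  simp_rw [← kker_prod]
  rw [posOrth_restrict, integral_fintype_prod_eq_prod (fun i t => kker (z i) (b i) p t)]
  refine Finset.prod_congr rfl fun i _ => ?_
  rw [kker_integral (z i) (hb i) (by simpa using div_pos (hz i) hp), abs_of_pos hp]

lemma ces_Q_pos (n : ℕ) (hn : 2 ≤ n) (α : ℝ) (a : Fin n → ℝ) (ha : ∀ i, 0 < a i)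
    {x : Fin n → ℝ} (hx : x ∈ posOrth n) : 0 < ∑ i, a i * x i ^ α := by
  have : Nonempty (Fin n) := ⟨⟨0, by omega⟩⟩
  exact Finset.sum_pos (fun i _ => mul_pos (ha i) (Real.rpow_pos_of_pos (hx i) _))
    Finset.univ_nonempty

lemma ces_pos (n : ℕ) (hn : 2 ≤ n) (α C : ℝ) (hC : 0 < C) (a : Fin n → ℝ) (ha : ∀ i, 0 < a i)
    {x : Fin n → ℝ} (hx : x ∈ posOrth n) : 0 < cesCost n α C a x :=
  mul_pos hC (Real.rpow_pos_of_pos (ces_Q_pos n hn α a ha hx) _)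

lemma ces_lower (n : ℕ) (hn : 2 ≤ n) (α C : ℝ) (hα : 0 < α) (hC : 0 < C) (a : Fin n → ℝ)
    (ha : ∀ i, 0 < a i) {x : Fin n → ℝ} (hx : x ∈ posOrth n) :
    ∑ i, (C / n * a i ^ (1 / α)) * x i ^ (1 : ℝ) ≤ cesCost n α C a x := by
  have hn0 : (0 : ℝ) < n := by exact_mod_cast (by omega : 0 < n)
  have h : ∀ i ∈ (Finset.univ : Finset (Fin n)),
      (C / n * a i ^ (1 / α)) * x i ^ (1 : ℝ) ≤ cesCost n α C a x / n := by
    intro i _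
    have h1 : a i * x i ^ α ≤ ∑ i, a i * x i ^ α :=
      Finset.single_le_sum (f := fun i => a i * x i ^ α)
        (fun j _ => (mul_pos (ha j) (Real.rpow_pos_of_pos (hx j) _)).le) (Finset.mem_univ i)
    have hp := mul_pos (ha i) (Real.rpow_pos_of_pos (hx i) α)
    have h2 := Real.rpow_le_rpow hp.le h1 (by positivity : 0 ≤ 1 / α)
    rw [Real.mul_rpow (ha i).le (Real.rpow_pos_of_pos (hx i) α).le,
      ← Real.rpow_mul (hx i).le, mul_one_div_cancel hα.ne'] at h2
    rw [cesCost, mul_assoc, mul_div_right_comm]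
    exact mul_le_mul_of_nonneg_left h2 (by positivity)
  refine (Finset.sum_le_sum h).trans (le_of_eq ?_)
  simp
  field_simp

lemma ces_meas (n : ℕ) (α C : ℝ) (a : Fin n → ℝ) : Measurable (cesCost n α C a) := by
  unfold cesCost
  fun_prop

lemma ces_integrable (n : ℕ) (hn : 2 ≤ n) (α C : ℝ) (hα : 0 < α) (hC : 0 < C) (a : Fin n → ℝ)
    (ha : ∀ i, 0 < a i) (z : Fin n → ℂ) (hz : ∀ i, 0 < (z i).re) :
    Integrable (fun x : Fin n → ℝ =>
      (∏ i, (x i : ℂ) ^ (z i - 1)) * (Real.exp (-cesCost n α C a x) : ℝ))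
      (volume.restrict (posOrth n)) := by
  have hn0 : (0 : ℝ) < n := by exact_mod_cast (by omega : 0 < n)
  refine (kker_prod_integrable n z (fun i => C / n * a i ^ (1 / α)) 1 one_pos
    (fun i => mul_pos (by positivity) (Real.rpow_pos_of_pos (ha i) _)) hz).mono ?_ ?_
  · have := ces_meas n α C a
    exact Measurable.aestronglyMeasurable (by fun_prop)
  · filter_upwards [ae_restrict_mem (posOrth_meas n)] with x hx
    rw [norm_mul, norm_mul]
    refine mul_le_mul_of_nonneg_left ?_ (norm_nonneg _)
    rw [Complex.norm_real, Complex.norm_real, Real.norm_of_nonneg (Real.exp_pos _).le,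
      Real.norm_of_nonneg (Real.exp_pos _).le]
    exact Real.exp_le_exp.2 (neg_le_neg (ces_lower n hn α C hα hC a ha hx))

open scoped Pointwise in
lemma posOrth_smul (n : ℕ) {t : ℝ} (ht : 0 < t) : t • posOrth n = posOrth n := by
  ext x
  rw [Set.mem_smul_set_iff_inv_smul_mem₀ ht.ne']
  simp [posOrth, ht]

lemma ces_scale_Q (n : ℕ) (α : ℝ) (a : Fin n → ℝ) {x : Fin n → ℝ} (hx : x ∈ posOrth n)
    {t : ℝ} (ht : 0 < t) : ∑ i, a i * (t • x) i ^ α = t ^ α * ∑ i, a i * x i ^ α := by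
  rw [Finset.mul_sum]
  refine Finset.sum_congr rfl fun i _ => ?_
  rw [Pi.smul_apply, smul_eq_mul, Real.mul_rpow ht.le (hx i).le]
  ring

lemma ces_scale (n : ℕ) (hn : 2 ≤ n) (α C : ℝ) (hα : 0 < α) (a : Fin n → ℝ) (ha : ∀ i, 0 < a i)
    {x : Fin n → ℝ} (hx : x ∈ posOrth n)
    {t : ℝ} (ht : 0 < t) : cesCost n α C a (t • x) = t * cesCost n α C a x := by
  rw [cesCost, ces_scale_Q n α a hx ht, Real.mul_rpow (by positivity)
    (ces_Q_pos n hn α a ha hx).le, ← Real.rpow_mul ht.le, mul_one_div_cancel hα.ne', cesCost,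
    Real.rpow_one]
  ring

lemma prod_scale (n : ℕ) (z : Fin n → ℂ) {x : Fin n → ℝ} (hx : x ∈ posOrth n)
    {t : ℝ} (ht : 0 < t) : ∏ i, (((t • x) i : ℝ) : ℂ) ^ (z i - 1)
      = (t : ℂ) ^ ((∑ i, z i) - n) * ∏ i, (x i : ℂ) ^ (z i - 1) := by
  have h0 : (t : ℂ) ≠ 0 := by simpa using ht.ne'
  have : (t : ℂ) ^ ((∑ i, z i) - n) = ∏ i, (t : ℂ) ^ (z i - 1) := by
    simp_rw [Complex.cpow_def_of_ne_zero h0]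
    rw [← Complex.exp_sum, ← Finset.mul_sum]
    simp
  rw [this, ← Finset.prod_mul_distrib]
  refine Finset.prod_congr rfl fun i _ => ?_
  rw [Pi.smul_apply, smul_eq_mul, Complex.ofReal_mul,
    Complex.mul_cpow_ofReal_nonneg ht.le (hx i).le]

lemma ces_cpow (n : ℕ) (hn : 2 ≤ n) (α C : ℝ) (hC : 0 < C) (a : Fin n → ℝ) (ha : ∀ i, 0 < a i)
    {x : Fin n → ℝ} (hx : x ∈ posOrth n) (s : ℂ) :
    (cesCost n α C a x : ℂ) ^ s = (C : ℂ) ^ s * ((∑ i, a i * x i ^ α : ℝ) : ℂ) ^ (s / α) := by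
  have hQ := ces_Q_pos n hn α a ha hx
  rw [cesCost, Complex.ofReal_mul, Complex.mul_cpow_ofReal_nonneg hC.le (by positivity),
    ← Complex.cpow_mul_ofReal_nonneg hQ.le]
  congr 2
  push_cast
  ring

lemma ces_inner (n : ℕ) (hn : 2 ≤ n) (α C : ℝ) (hα : 0 < α) (hC : 0 < C) (a : Fin n → ℝ)
    (ha : ∀ i, 0 < a i) (z : Fin n → ℂ) {t : ℝ} (ht : 0 < t) :
    ∫ x in posOrth n, ((∏ i, (x i : ℂ) ^ (z i - 1)) * (Real.exp (-∑ i, a i * x i ^ α) : ℝ))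
        * (cesCost n α C a x : ℂ) ^ ((∑ i, z i) / ((1 : ℝ) : ℂ))
        * kker (∑ i, z i) (cesCost n α C a x) 1 t
      = (C : ℂ) ^ (∑ i, z i) *
    ∫ x in posOrth n, ((∏ i, (x i : ℂ) ^ (z i - 1)) * (Real.exp (-cesCost n α C a x) : ℝ))
        * ((∑ i, a i * x i ^ α : ℝ) : ℂ) ^ ((-∑ i, z i) / ((-α : ℝ) : ℂ))
        * kker (-∑ i, z i) (∑ i, a i * x i ^ α) (-α) t := by
  set s := ∑ i, z i with hs
  have h0 : (t : ℂ) ≠ 0 := by simpa using ht.ne'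
  have key := Measure.setIntegral_comp_smul_of_pos (volume : Measure (Fin n → ℝ))
    (fun x => ((∏ i, (x i : ℂ) ^ (z i - 1)) * (Real.exp (-cesCost n α C a x) : ℝ))
        * ((∑ i, a i * x i ^ α : ℝ) : ℂ) ^ ((-s) / ((-α : ℝ) : ℂ))
        * kker (-s) (∑ i, a i * x i ^ α) (-α) t) (posOrth n) ht
  rw [posOrth_smul n ht, Module.finrank_fin_fun, eq_inv_smul_iff₀ (by positivity)] at key
  rw [← key, ← integral_smul, ← integral_const_mul]
  refine setIntegral_congr_fun (posOrth_meas n) fun x hx => ?_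
  have hQ := ces_Q_pos n hn α a ha hx
  have hta : 0 < t ^ α := by positivity
  rw [prod_scale n z hx ht, ces_scale n hn α C hα a ha hx ht, ces_scale_Q n α a hx ht,
    Complex.ofReal_one, div_one, ces_cpow n hn α C hC a ha hx, Complex.ofReal_neg, neg_div_neg_eq,
    Complex.ofReal_mul (t ^ α), Complex.mul_cpow_ofReal_nonneg hta.le hQ.le,
    ← Complex.cpow_mul_ofReal_nonneg ht.le, kker, kker, Real.rpow_one,
    mul_div_cancel₀ _ (by simpa using hα.ne' : (α : ℂ) ≠ 0), Complex.real_smul]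
  have e1 : t ^ α * (∑ i, a i * x i ^ α) * t ^ (-α) = ∑ i, a i * x i ^ α := by
    rw [Real.rpow_neg ht.le]; field_simp
  have e2 : (t : ℂ) ^ (s - 1) = (t : ℂ) ^ n * ((t : ℂ) ^ (s - n) * (t : ℂ) ^ s * (t : ℂ) ^ (-s - 1)) := by
    rw [← Complex.cpow_natCast, ← Complex.cpow_add _ _ h0, ← Complex.cpow_add _ _ h0,
      ← Complex.cpow_add _ _ h0]
    congr 1
    ring
  rw [e1, e2, mul_comm t (cesCost n α C a x)]
  push_cast
  ring

/-- Mellin transform of `e^{-q_α}` for the CES cost function: for `Re z ∈ ℝ^n_+`,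
writing `s = z₁ + ⋯ + zₙ`,
`(M e^{-q_α})(z) = Γ(s) / (α^{n-1} C^s Γ(s/α)) ∏ⱼ aⱼ^{-zⱼ/α} Γ(zⱼ/α)`;
in particular `(M e^{-q_α})(z) ≠ 0`. -/
theorem mellin_ces_eq
    (n : ℕ) (hn : 2 ≤ n) (α : ℝ) (hα : α ∈ Ioc (0 : ℝ) 1
    ) (C : ℝ) (hC : 0 < C) (a : Fin n → ℝ) (ha : ∀ i, 0 < a i)
    (hsum : ∑ i, a i = 1) :
    ∀ z : Fin n → ℂ, (∀ i, 0 < (z i).re) →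
      (mellinT n (fun x => Real.exp (-cesCost n α C a x)) z =
          Complex.Gamma (∑ i, z i) /
              ((α : ℂ) ^ (n - 1) * (C : ℂ) ^ (∑ i, z i) *
                Complex.Gamma ((∑ i, z i) / (α : ℂ))) *
            ∏ j, (a j : ℂ) ^ (-(z j) / (α : ℂ)) * Complex.Gamma (z j / (α : ℂ))) ∧
        mellinT n (fun x => Real.exp (-cesCost n α C a x)) z ≠ 0 := by
  intro z hz
  obtain ⟨hα, -⟩ := hα
  have hn0 : (0 : ℕ) < n := by omega
  have : Nonempty (Fin n) := ⟨⟨0, hn0⟩⟩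
  have hs : 0 < (∑ i, z i).re := by
    rw [Complex.re_sum]
    exact Finset.sum_pos (fun i _ => hz i) Finset.univ_nonempty
  have hα0 : (α : ℂ) ≠ 0 := by simpa using hα.ne'
  have hA := kker_fubini (kker_prod_integrable n z a α hα ha hz) (cesCost n α C a)
    (ces_meas n α C a)
    (by filter_upwards [ae_restrict_mem (posOrth_meas n)] with x hx
        exact ces_pos n hn α C hC a ha hx) (∑ i, z i) 1 one_ne_zero (by simpa using hs)
  have hsα : 0 < ((∑ i, z i) / (α : ℂ)).re := by
    rw [Complex.div_ofReal_re]; exact div_pos hs hα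
  have hB := kker_fubini (ces_integrable n hn α C hα hC a ha z hz) (fun x => ∑ i, a i * x i ^ α)
    (by fun_prop)
    (by filter_upwards [ae_restrict_mem (posOrth_meas n)] with x hx
        exact ces_Q_pos n hn α a ha hx) (-∑ i, z i) (-α) (neg_ne_zero.2 hα.ne')
        (by rw [Complex.ofReal_neg, neg_div_neg_eq]; exact hsα)
  rw [setIntegral_congr_fun measurableSet_Ioi
    (fun t ht => ces_inner n hn α C hα hC a ha z ht), integral_const_mul, hB,
    kker_prod_integral n z a α hα ha hz] at hA
  rw [Complex.ofReal_neg, neg_div_neg_eq, abs_neg, abs_of_pos hα, abs_one, inv_one,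
    Complex.ofReal_one, div_one, one_mul] at hA
  have hC0 : (C : ℂ) ^ (∑ i, z i) ≠ 0 := by
    rw [Ne, Complex.cpow_eq_zero_iff]; simp [hC.ne']
  have hG := Complex.Gamma_ne_zero_of_re_pos hsα
  have hG' := Complex.Gamma_ne_zero_of_re_pos hs
  have hmain : mellinT n (fun x => Real.exp (-cesCost n α C a x)) z =
          Complex.Gamma (∑ i, z i) /
              ((α : ℂ) ^ (n - 1) * (C : ℂ) ^ (∑ i, z i) *
                Complex.Gamma ((∑ i, z i) / (α : ℂ))) *
            ∏ j, (a j : ℂ) ^ (-(z j) / (α : ℂ)) * Complex.Gamma (z j / (α : ℂ)) := by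
    change (C : ℂ) ^ (∑ i, z i) * (((α⁻¹ : ℝ) : ℂ) * _ *
      mellinT n (fun x => Real.exp (-cesCost n α C a x)) z) = _ at hA
    simp_rw [mul_assoc ((α⁻¹ : ℝ) : ℂ)] at hA
    rw [Finset.prod_mul_distrib, Finset.prod_const, Finset.card_univ, Fintype.card_fin] at hA
    simp_rw [neg_div]
    obtain ⟨m, rfl⟩ : ∃ m, n = m + 1 := ⟨n - 1, by omega⟩
    rw [Nat.add_sub_cancel, div_mul_eq_mul_div, eq_div_iff (mul_ne_zero (mul_ne_zero (pow_ne_zero _ hα0) hC0) hG)]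
    rw [Complex.ofReal_inv, inv_pow, pow_succ] at hA
    field_simp at hA
    linear_combination hA
  refine ⟨hmain, ?_⟩
  rw [hmain]
  refine mul_ne_zero (div_ne_zero hG' (mul_ne_zero (mul_ne_zero (pow_ne_zero _ hα0) hC0) hG)) ?_
  refine Finset.prod_ne_zero_iff.2 fun j _ => mul_ne_zero ?_ ?_
  · rw [Ne, Complex.cpow_eq_zero_iff]; simp [(ha j).ne']
  · refine Complex.Gamma_ne_zero_of_re_pos ?_
    rw [Complex.div_ofReal_re]; exact div_pos (hz j) hα
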